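/- arXiv:2008.10305 — 7 statements merged into one kernel-verified Lean document; each statement's English description precedes it below -/
import Mathlib

section
/- For every odd integer n ≥ 3, there do not exist points O, A₀, …, A_{n−1} in the Euclidean plane ℝ² such that dist(O, Aᵢ) is an odd integer for every i ∈ {0,…,n−1} and dist(Aᵢ, A_{(i+1) mod n}) is an odd integer for every i ∈ {0,…,n−1}. (In other words, the odd wheel graph W_n admits no drawing in the plane in which every edge has odd integer length, so odd wheels are not odd-distance graphs.) -/
/-!
Put the hub at the origin of `ℂ`, so that the rim points become complex numbers `z i` with
`|z i|² = s i ²`, where the sign of the odd integer `s i` is chosen such that `s i ≡ 1 (mod 4)`.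
Write `p i = conj (z i) * z (i + 1)` and `b i = s i * s (i + 1)`. By the law of cosines
`p + conj p = a` with `a = s i ² + s (i + 1) ² - e i ²`, where `e i` is the odd length of the rim
edge, and `p * conj p = b²`. Hence `p` is an algebraic integer, a root of `X² - a X + b²`, and
`a ≡ b ≡ 1 (mod 4)`, so that
`p³ + b³ = (p + b) (p² - b p + b²) = (p + b) (a - b) p`
is divisible by `4` in the ring of algebraic integers.

Around the cycle `∏ p i = ∏ s i ² = ∏ b i =: P`, an odd integer. Since the number of factors is odd,
multiplying the congruences `p i ³ ≡ - b i ³` gives `P³ ≡ -P³ (mod 4)`, i.e. `4 ∣ 2 P³` in the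
algebraic integers, hence in `ℤ`, which is impossible for odd `P`.
-/

/-- Divisibility of one rational integer by another may be tested in the ring of algebraic
integers, because `ℤ` is integrally closed. -/
lemma int_dvd_of_dvd_integralClosure {m k : ℤ} (hm : m ≠ 0)
    (h : (m : integralClosure ℤ ℂ) ∣ (k : integralClosure ℤ ℂ)) : m ∣ k := by
  obtain ⟨w, hw⟩ := h
  have hw' : (k : ℂ) = m * (w : ℂ) := by
    have := congrArg (fun x : integralClosure ℤ ℂ => (x : ℂ)) hw
    simpa using this
  have hmC : (m : ℂ) ≠ 0 := by exact_mod_cast hm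
  have hq : algebraMap ℚ ℂ ((k : ℚ) / m) = (w : ℂ) := by
    simp only [map_div₀, map_intCast]
    rw [hw']
    field_simp
  have hpint : IsIntegral ℤ ((k : ℚ) / m) := by
    have h1 : IsIntegral ℤ (w : ℂ) := w.2
    rw [← hq] at h1
    exact (isIntegral_algebraMap_iff (algebraMap ℚ ℂ).injective).1 h1
  obtain ⟨y, hy⟩ := IsIntegrallyClosed.isIntegral_iff.1 hpint
  refine ⟨y, ?_⟩
  have hmQ : (m : ℚ) ≠ 0 := by exact_mod_cast hm
  have hy' : (y : ℚ) = (k : ℚ) / m := by simpa using hy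
  have : (k : ℚ) = m * y := by rw [hy']; field_simp
  exact_mod_cast this

/-- The congruence `p³ ≡ -b³ (mod 4)` for a root `p` of `X² - a X + b²` with `a ≡ b (mod 4)`. -/
lemma four_dvd_cube_add_cube {R : Type*} [CommRing R] {p : R} {a b : ℤ}
    (h : p ^ 2 - a * p + (b : R) ^ 2 = 0) (hab : (4 : ℤ) ∣ a - b) :
    ((4 : ℤ) : R) ∣ p ^ 3 - (-(b : R) ^ 3) := by
  obtain ⟨c, hc⟩ := hab
  refine ⟨(p + b) * c * p, ?_⟩
  have hc' : (a : R) - b = ((4 : ℤ) : R) * c := by exact_mod_cast congrArg (Int.cast : ℤ → R) hc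
  linear_combination (p + b) * h + (p + b) * p * hc'

lemma dvd_prod_sub_prod {R ι : Type*} [CommRing R] (m : R) (s : Finset ι) (f g : ι → R)
    (h : ∀ i ∈ s, m ∣ f i - g i) : m ∣ ∏ i ∈ s, f i - ∏ i ∈ s, g i := by
  simp only [← Ideal.mem_span_singleton, ← Ideal.Quotient.eq, map_prod] at h ⊢
  exact Finset.prod_congr rfl h

/-- The complex form of the theorem, with the hub at `0` and with the spoke lengths carrying the
signs that make them `1` modulo `4`. -/
lemma no_odd_wheel_complex (n : ℕ) [NeZero n] (hodd : Odd n) (z : ZMod n → ℂ) (s e : ZMod n → ℤ)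
    (hs : ∀ i, s i % 4 = 1) (he : ∀ i, e i % 2 = 1)
    (hz : ∀ i, Complex.normSq (z i) = (s i : ℝ) ^ 2)
    (hd : ∀ i, Complex.normSq (z i - z (i + 1)) = (e i : ℝ) ^ 2) : False := by
  set p : ZMod n → ℂ := fun i => (starRingEnd ℂ) (z i) * z (i + 1) with hp
  set a : ZMod n → ℤ := fun i => s i ^ 2 + s (i + 1) ^ 2 - e i ^ 2 with ha
  set b : ZMod n → ℤ := fun i => s i * s (i + 1) with hb
  have hzC : ∀ i, z i * (starRingEnd ℂ) (z i) = (s i : ℂ) ^ 2 := fun i => by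
    rw [Complex.mul_conj, hz]; push_cast; rfl
  have hdC : ∀ i, (z i - z (i + 1)) * ((starRingEnd ℂ) (z i) - (starRingEnd ℂ) (z (i + 1)))
      = (e i : ℂ) ^ 2 := fun i => by
    rw [← map_sub, Complex.mul_conj, hd]; push_cast; rfl
  have hquad : ∀ i, p i ^ 2 - a i * p i + (b i : ℂ) ^ 2 = 0 := fun i => by
    have h1 := hzC i
    have h2 := hzC (i + 1)
    have h3 := hdC i
    simp only [hp, ha, hb]
    push_cast
    rw [← h3, mul_pow (s i : ℂ), ← h1, ← h2]
    ring
  have hpint : ∀ i, IsIntegral ℤ (p i) := fun i => by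
    refine ⟨Polynomial.X ^ 2 - Polynomial.C (a i) * Polynomial.X + Polynomial.C (b i ^ 2), ?_, ?_⟩
    · monicity!
    · rw [Polynomial.eval₂_add, Polynomial.eval₂_sub, Polynomial.eval₂_mul, Polynomial.eval₂_C,
        Polynomial.eval₂_C, Polynomial.eval₂_X_pow, Polynomial.eval₂_X]
      simpa using hquad i
  have hab : ∀ i, (4 : ℤ) ∣ a i - b i := fun i => by
    obtain ⟨x, hx⟩ : ∃ x, s i = 4 * x + 1 := ⟨s i / 4, by have := hs i; omega⟩
    obtain ⟨y, hy⟩ : ∃ y, s (i + 1) = 4 * y + 1 := ⟨s (i + 1) / 4, by have := hs (i + 1); omega⟩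
    obtain ⟨w, hw⟩ : ∃ w, e i = 2 * w + 1 := ⟨e i / 2, by have := he i; omega⟩
    simp only [ha, hb, hx, hy, hw]
    exact ⟨4 * x ^ 2 + x + 4 * y ^ 2 + y - w ^ 2 - w - 4 * x * y, by ring⟩
  let q : ZMod n → integralClosure ℤ ℂ := fun i => ⟨p i, hpint i⟩
  have hshiftS : ∏ i, s (i + 1) = ∏ i, s i := Equiv.prod_comp (Equiv.addRight (1 : ZMod n)) s
  have hshiftZ : ∏ i, z (i + 1) = ∏ i, z i := Equiv.prod_comp (Equiv.addRight (1 : ZMod n)) z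
  have hprod : ∏ i, q i = ((∏ i, b i : ℤ) : integralClosure ℤ ℂ) := by
    apply Subtype.ext
    have h1 : ∏ i, p i = ((∏ i, b i : ℤ) : ℂ) := by
      simp only [hp, hb, Finset.prod_mul_distrib, hshiftS, hshiftZ]
      rw [← Finset.prod_mul_distrib]
      push_cast
      rw [← Finset.prod_mul_distrib]
      refine Finset.prod_congr rfl fun i _ => ?_
      rw [mul_comm, hzC, sq]
    simpa [q] using h1
  have hcong := dvd_prod_sub_prod ((4 : ℤ) : integralClosure ℤ ℂ) Finset.univ
    (fun i => q i ^ 3) (fun i => -(b i : integralClosure ℤ ℂ) ^ 3) fun i _ =>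
      four_dvd_cube_add_cube (Subtype.ext (by simpa [q] using hquad i)) (hab i)
  rw [Finset.prod_pow, hprod, Finset.prod_neg, Finset.card_univ, ZMod.card, hodd.neg_one_pow,
    Finset.prod_pow] at hcong
  set P : ℤ := ∏ i, b i with hP
  have hdvd : (4 : ℤ) ∣ 2 * P ^ 3 := by
    apply int_dvd_of_dvd_integralClosure (by norm_num)
    convert hcong using 1
    rw [← Int.cast_prod, ← hP]
    push_cast
    ring
  have hPodd : Odd P := by
    refine Finset.prod_induction b Odd (fun _ _ h1 h2 => h1.mul h2) odd_one fun i _ => ?_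
    have h1 := hs i
    have h2 := hs (i + 1)
    exact (Int.odd_iff.2 (by omega)).mul (Int.odd_iff.2 (by omega))
  obtain ⟨c, hc⟩ := hPodd.pow (n := 3)
  omega

/-- **Odd wheels are not odd-distance graphs.**
For every odd `n ≥ 3` there is no placement of a hub `O` and cycle points
`A 0, …, A (n-1)` in the Euclidean plane such that every spoke `dist O (A i)`
and every cycle edge `dist (A i) (A (i+1))` (index mod `n`) is an odd integer. -/
theorem odd_wheel_not_odd_distance (n : ℕ) (hn : 3 ≤ n) (hodd : Odd n) :
    ¬ ∃ (O : EuclideanSpace ℝ (Fin 2)) (A : ZMod n → EuclideanSpace ℝ (Fin 2)),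
        (∀ i : ZMod n, ∃ k : ℕ, dist O (A i) = 2 * k + 1) ∧
        (∀ i : ZMod n, ∃ k : ℕ, dist (A i) (A (i + 1)) = 2 * k + 1) := by
  rintro ⟨O, A, hO, hA⟩
  have : NeZero n := ⟨by omega⟩
  have hdist : ∀ X Y : EuclideanSpace ℝ (Fin 2),
      dist X Y ^ 2 = (X 0 - Y 0) ^ 2 + (X 1 - Y 1) ^ 2 := fun X Y => by
    rw [EuclideanSpace.dist_eq, Real.sq_sqrt (by positivity), Fin.sum_univ_two,
      Real.dist_eq, Real.dist_eq, sq_abs, sq_abs]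
  have hs : ∀ i, ∃ s : ℤ, s % 4 = 1 ∧ dist O (A i) ^ 2 = (s : ℝ) ^ 2 := fun i => by
    obtain ⟨k, hk⟩ := hO i
    rcases Nat.even_or_odd' k with ⟨j, hj | hj⟩
    · exact ⟨2 * k + 1, by omega, by rw [hk]; push_cast; ring⟩
    · exact ⟨-(2 * k + 1), by omega, by rw [hk]; push_cast; ring⟩
  choose s hs1 hs2 using hs
  choose k hk using hA
  refine no_odd_wheel_complex n hodd (fun i => ⟨A i 0 - O 0, A i 1 - O 1⟩) s
    (fun i => 2 * k i + 1) hs1 (fun i => by omega) (fun i => ?_) (fun i => ?_)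
  · rw [← hs2, hdist, Complex.normSq_apply]
    ring
  · have := hdist (A i) (A (i + 1))
    rw [hk] at this
    push_cast
    rw [this, Complex.normSq_apply]
    simp only [Complex.sub_re, Complex.sub_im]
    ring
end

section
/- Let θ₀, …, θ_{n−1} be real numbers and D₀, …, D_{n−1} squarefree integers such that for each i the angle θᵢ has residual Dᵢ, i.e. cos θᵢ is rational and sin θᵢ = qᵢ·√(Dᵢ) for some rational number qᵢ. If the sum θ₀ + ⋯ + θ_{n−1} is a rational multiple of π, then for every integer d the restricted sum ∑_{i : Dᵢ = d} θᵢ is also a rational multiple of π; furthermore, each such restricted sum is an integer multiple of π/3 or an integer multiple of π/2. -/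
/-!
Let `α d` be the sum of the angles of residual `d`. By the addition formulas `cos (α d)` is rational
and `sin (α d)` is a rational multiple of `√d`, so `z d = exp (i α d)` has norm one and lies in the
field generated over `ℚ` by a square root `w d` of `-d`. Hence a Galois automorphism `σ`
of `ℚ̄` fixes `z d` if it fixes `w d`, and otherwise sends `z d` to its inverse.

The hypothesis says that `∏ z d` is a root of unity; the claim is that each factor is one
(`isOfFinOrder_of_prod`). Given two different squarefree integers `d`, `e`, the product `d * e` is
not a rational square, so some `σ` moves `w d * w e`, that is, it fixes exactly one of `w d`, `w e`
(`exists_separating`). Multiplying `P = ∏ z d` by `σ P` leaves the square of the product of the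
factors with `σ (w d) = w d`. So the product of these factors is a root of unity, hence so is the
product of the others, and both are products over strictly smaller sets: induction applies.

Once `α d` is a rational multiple of `π` with rational cosine, Niven's theorem leaves only the
multiples of `π / 3` and of `π / 2`.
-/

theorem not_isSquare_mul_of_squarefree {d e : ℤ} (hd : Squarefree d) (he : Squarefree e)
    (hne : d ≠ e) : ¬ IsSquare (d * e) := by
  rintro ⟨t, ht⟩
  have hdt : d ∣ t := by
    rw [← hd.dvd_pow_iff_dvd (n := 2) two_ne_zero]
    exact ⟨e, by rw [ht, sq]⟩
  obtain ⟨s, rfl⟩ := hdt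
  have h1 : e = d * (s * s) := by
    apply mul_left_cancel₀ hd.ne_zero
    rw [ht]; ring
  have hs : IsUnit s := he s ⟨d, by rw [h1]; ring⟩
  have hs' : s * s = 1 := by
    rcases Int.isUnit_iff.mp hs with rfl | rfl <;> rfl
  exact hne (by rw [h1, hs', mul_one])

theorem algEquiv_apply_sqrt {K : Type*} [Field K] [CharZero K] [Algebra ℚ K] (σ : K ≃ₐ[ℚ] K)
    {w : K} {m : ℤ} (hw : w ^ 2 = m) : σ w = w ∨ σ w = -w := by
  apply sq_eq_sq_iff_eq_or_eq_neg.mp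
  rw [← map_pow, hw, map_intCast]

/-- Square roots of the negatives of two different squarefree integers are separated by a Galois
automorphism, because their product is irrational. -/
theorem exists_separating {K : Type*} [Field K] [CharZero K] [Algebra ℚ K] [IsGalois ℚ K]
    {d e : ℤ} (hd : Squarefree d) (he : Squarefree e) (hne : d ≠ e) {v w : K}
    (hv : v ^ 2 = (-d : ℤ)) (hw : w ^ 2 = (-e : ℤ)) :
    ∃ σ : K ≃ₐ[ℚ] K, (σ v = v ∧ σ w ≠ w) ∨ (σ v ≠ v ∧ σ w = w) := by
  by_contra! hcon
  have hfix : ∀ σ : K ≃ₐ[ℚ] K, σ (v * w) = v * w := by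
    intro σ
    obtain ⟨h1, h2⟩ := hcon σ
    rw [map_mul]
    by_cases hσ : σ v = v
    · rw [hσ, h1 hσ]
    · rw [(algEquiv_apply_sqrt σ hv).resolve_left hσ,
        (algEquiv_apply_sqrt σ hw).resolve_left (h2 hσ), neg_mul_neg]
  obtain ⟨r, hr⟩ := (InfiniteGalois.mem_range_algebraMap_iff_fixed (k := ℚ) (v * w)).mpr hfix
  apply not_isSquare_mul_of_squarefree hd he hne
  rw [← Rat.isSquare_intCast_iff]
  refine ⟨r, (algebraMap ℚ K).injective ?_⟩
  rw [map_mul, hr, map_intCast]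
  push_cast at hv hw ⊢
  linear_combination (e : K) * hv - v ^ 2 * hw

theorem isOfFinOrder_right_of_mul {K : Type*} [Field K] {x y : K} (hxy : IsOfFinOrder (x * y))
    (hx : IsOfFinOrder x) : IsOfFinOrder y := by
  obtain ⟨n, hn, h1⟩ := isOfFinOrder_iff_pow_eq_one.mp hxy
  obtain ⟨m, hm, h2⟩ := isOfFinOrder_iff_pow_eq_one.mp hx
  refine isOfFinOrder_iff_pow_eq_one.mpr ⟨n * m, Nat.mul_pos hn hm, ?_⟩
  have h3 : (x * y) ^ (n * m) = 1 := by rw [pow_mul, h1, one_pow]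
  rwa [mul_pow, mul_comm n m, pow_mul x, h2, one_pow, one_mul, mul_comm m n] at h3

/-- Norm-one elements of the fields `ℚ(√-d)`, for distinct squarefree `d`, are multiplicatively
independent modulo roots of unity. -/
theorem isOfFinOrder_of_prod {K : Type*} [Field K] [CharZero K] [Algebra ℚ K] [IsGalois ℚ K]
    (w z : ℤ → K) (a b : ℤ → ℚ) (hw : ∀ d, w d ^ 2 = (-d : ℤ))
    (hz : ∀ d, z d = algebraMap ℚ K (a d) + algebraMap ℚ K (b d) * w d)
    (hnorm : ∀ d, (algebraMap ℚ K (a d) - algebraMap ℚ K (b d) * w d) * z d = 1)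
    (S : Finset ℤ) (hS : ∀ d ∈ S, Squarefree d) (hP : IsOfFinOrder (∏ d ∈ S, z d)) :
    ∀ d ∈ S, IsOfFinOrder (z d) := by
  classical
  induction S using Finset.strongInduction with
  | H S ih =>
  intro d hd
  by_cases hall : ∀ e ∈ S, e = d
  · have : S = {d} := Finset.eq_singleton_iff_unique_mem.mpr ⟨hd, hall⟩
    simpa [this] using hP
  push Not at hall
  obtain ⟨e, he, hed⟩ := hall
  obtain ⟨σ, hσ⟩ := exists_separating (hS d hd) (hS e he) hed.symm (hw d) (hw e)
  have hfix : ∏ c ∈ S, (z c * σ (z c)) = (∏ c ∈ S with σ (w c) = w c, z c) ^ 2 := by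
    rw [← Finset.prod_pow, Finset.prod_filter]
    refine Finset.prod_congr rfl fun c _ => ?_
    have hσz : σ (z c) = algebraMap ℚ K (a c) + algebraMap ℚ K (b c) * σ (w c) := by
      rw [hz, map_add, map_mul, AlgEquiv.commutes, AlgEquiv.commutes]
    split_ifs with hc
    · rw [hσz, hc, ← hz, sq]
    · rw [hσz, (algEquiv_apply_sqrt σ (hw c)).resolve_left hc, mul_neg, ← sub_eq_add_neg,
        mul_comm, hnorm]
  have hplus : IsOfFinOrder (∏ c ∈ S with σ (w c) = w c, z c) := by
    refine IsOfFinOrder.of_pow (n := 2) ?_ two_ne_zero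
    rw [← hfix, Finset.prod_mul_distrib, ← map_prod]
    exact hP.mul (MonoidHom.isOfFinOrder (σ : K →* K) hP)
  have hminus : IsOfFinOrder (∏ c ∈ S with ¬ σ (w c) = w c, z c) := by
    refine isOfFinOrder_right_of_mul ?_ hplus
    rwa [Finset.prod_filter_mul_prod_filter_not]
  have hsub : ∀ c ∈ S.filter (fun c => σ (w c) = w c), IsOfFinOrder (z c) := by
    refine ih _ (Finset.filter_ssubset.mpr ?_) (fun c hc => hS c (Finset.mem_filter.mp hc).1) hplus
    rcases hσ with h | h
    · exact ⟨e, he, h.2⟩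
    · exact ⟨d, hd, h.1⟩
  have hsub' : ∀ c ∈ S.filter (fun c => ¬ σ (w c) = w c), IsOfFinOrder (z c) := by
    refine ih _ (Finset.filter_ssubset.mpr ?_) (fun c hc => hS c (Finset.mem_filter.mp hc).1) hminus
    rcases hσ with h | h
    · exact ⟨d, hd, not_not.mpr h.1⟩
    · exact ⟨e, he, not_not.mpr h.2⟩
  by_cases hc : σ (w d) = w d
  · exact hsub d (Finset.mem_filter.mpr ⟨hd, hc⟩)
  · exact hsub' d (Finset.mem_filter.mpr ⟨hd, hc⟩)

/-- Angles of a common residual are closed under addition. -/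
theorem residual_sum {ι : Type*} (θ : ι → ℝ) (d : ℤ) (s : Finset ι)
    (h : ∀ i ∈ s, ∃ a b : ℚ, Real.cos (θ i) = a ∧ Real.sin (θ i) = b * Real.sqrt d) :
    ∃ a b : ℚ, Real.cos (∑ i ∈ s, θ i) = a ∧ Real.sin (∑ i ∈ s, θ i) = b * Real.sqrt d := by
  classical
  induction s using Finset.induction_on with
  | empty => exact ⟨1, 0, by simp, by simp⟩
  | insert i s hi ih =>
    obtain ⟨a, b, ha, hb⟩ := h i (Finset.mem_insert_self i s)
    obtain ⟨a', b', ha', hb'⟩ := ih fun j hj => h j (Finset.mem_insert_of_mem hj)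
    -- For negative `d` the real square root vanishes, whence the maximum.
    have hsq : Real.sqrt d * Real.sqrt d = ((max d 0 : ℤ) : ℝ) := by
      rcases le_total 0 d with h0 | h0
      · rw [max_eq_left h0, Real.mul_self_sqrt (by exact_mod_cast h0)]
      · rw [max_eq_right h0, Real.sqrt_eq_zero_of_nonpos (by exact_mod_cast h0)]; simp
    refine ⟨a * a' - b * b' * (max d 0 : ℤ), a * b' + b * a', ?_, ?_⟩
    · rw [Finset.sum_insert hi, Real.cos_add, ha, hb, ha', hb', Rat.cast_sub, Rat.cast_mul,
        Rat.cast_mul, Rat.cast_mul, Rat.cast_intCast, ← hsq]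
      ring
    · rw [Finset.sum_insert hi, Real.sin_add, ha, hb, ha', hb']
      push_cast; ring

/-- The point of the unit circle at an angle of residual `d`, written as `a + b * w` with `w` a
square root of `-d`. For negative `d` the sine vanishes and `b = 0`. -/
theorem exp_residual (α : ℝ) (d : ℤ)
    (h : ∃ a b : ℚ, Real.cos α = a ∧ Real.sin α = b * Real.sqrt d) :
    ∃ (w : ℂ) (a b : ℚ), w ^ 2 = (-d : ℤ) ∧ Complex.exp (α * Complex.I) = a + b * w ∧
      ((a : ℂ) - b * w) * (a + b * w) = 1 := by
  obtain ⟨a, b, ha, hb⟩ := h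
  obtain ⟨w, b', hw, hs⟩ : ∃ (w : ℂ) (b' : ℚ), w ^ 2 = (-d : ℤ) ∧
      (Real.sin α : ℂ) * Complex.I = b' * w := by
    rcases le_or_gt 0 d with h0 | h0
    · refine ⟨(Real.sqrt d : ℝ) * Complex.I, b, ?_, ?_⟩
      · rw [mul_pow, ← Complex.ofReal_pow, Real.sq_sqrt (by exact_mod_cast h0), Complex.I_sq]
        push_cast; ring
      · rw [hb]; push_cast; ring
    · refine ⟨(Real.sqrt (-d : ℤ) : ℝ), 0, ?_, ?_⟩
      · rw [← Complex.ofReal_pow, Real.sq_sqrt (by exact_mod_cast (by omega : 0 ≤ -d))]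
        push_cast; ring
      · rw [hb, Real.sqrt_eq_zero_of_nonpos (by exact_mod_cast h0.le)]; simp
  have hc : (Real.cos α : ℂ) = a := by rw [ha]; simp
  have hsq : (Real.sin α : ℂ) ^ 2 + (Real.cos α : ℂ) ^ 2 = 1 := by
    exact_mod_cast Real.sin_sq_add_cos_sq α
  refine ⟨w, a, b', hw, ?_, ?_⟩
  · rw [Complex.exp_mul_I, ← Complex.ofReal_cos, ← Complex.ofReal_sin, hs, hc]
  · rw [← hs, ← hc]
    linear_combination hsq - (Real.sin α : ℂ) ^ 2 * Complex.I_sq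

theorem isOfFinOrder_exp_iff (α : ℝ) :
    IsOfFinOrder (Complex.exp (α * Complex.I)) ↔ ∃ r : ℚ, α = (r : ℝ) * Real.pi := by
  rw [isOfFinOrder_iff_pow_eq_one]
  constructor
  · rintro ⟨n, hn, h⟩
    rw [← Complex.exp_nat_mul, Complex.exp_eq_one_iff] at h
    obtain ⟨m, hm⟩ := h
    have hm' : (n : ℂ) * α = m * (2 * Real.pi) := by
      apply mul_right_cancel₀ Complex.I_ne_zero
      linear_combination hm
    have hm'' : (n : ℝ) * α = m * (2 * Real.pi) := by exact_mod_cast hm'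
    have hn' : (n : ℝ) ≠ 0 := by exact_mod_cast hn.ne'
    refine ⟨2 * m / n, ?_⟩
    push_cast
    field_simp
    linear_combination hm''
  · rintro ⟨r, rfl⟩
    refine ⟨2 * r.den, Nat.mul_pos two_pos r.den_pos, ?_⟩
    simpa using Complex.exp_rat_mul_pi_mul_I_pow_two_mul_den r

/-- Niven's theorem, in terms of the angle instead of its cosine. -/
theorem niven_angle (α : ℝ) (hα : ∃ r : ℚ, α = (r : ℝ) * Real.pi)
    (hc : ∃ a : ℚ, Real.cos α = a) :
    (∃ k : ℤ, α = (k : ℝ) * (Real.pi / 3)) ∨ (∃ k : ℤ, α = (k : ℝ) * (Real.pi / 2)) := by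
  have key : ∀ j : ℤ, Real.cos α = Real.cos (j * (Real.pi / 3)) →
      ∃ k : ℤ, α = (k : ℝ) * (Real.pi / 3) := by
    intro j hj
    obtain ⟨k, hk | hk⟩ := Real.cos_eq_cos_iff.mp hj.symm
    · exact ⟨6 * k + j, by rw [hk]; push_cast; ring⟩
    · exact ⟨6 * k - j, by rw [hk]; push_cast; ring⟩
  have h := niven hα hc
  simp only [Set.mem_insert_iff, Set.mem_singleton_iff] at h
  rcases h with h | h | h | h | h
  · refine Or.inl (key 3 ?_)
    rw [h, show ((3 : ℤ) : ℝ) * (Real.pi / 3) = Real.pi by push_cast; ring, Real.cos_pi]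
  · refine Or.inl (key 2 ?_)
    rw [h, show ((2 : ℤ) : ℝ) * (Real.pi / 3) = Real.pi - Real.pi / 3 by push_cast; ring,
      Real.cos_pi_sub, Real.cos_pi_div_three]
    norm_num
  · obtain ⟨k, hk⟩ := Real.cos_eq_zero_iff.mp h
    exact Or.inr ⟨2 * k + 1, by rw [hk]; push_cast; ring⟩
  · refine Or.inl (key 1 ?_)
    rw [h, Int.cast_one, one_mul, Real.cos_pi_div_three]
  · refine Or.inl (key 0 ?_)
    rw [h, Int.cast_zero, zero_mul, Real.cos_zero]


/-- **The Splitting Theorem for angles that have a residual.**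
Let `θ i` be angles and `D i` squarefree integers such that each `θ i` has
residual `D i` (that is, `cos (θ i)` is rational and `sin (θ i) = q i · √(D i)`
for a rational `q i`). If the sum of all the angles is a rational multiple of
`π`, then for every integer `d` the sum restricted to the angles of residual
`d` is also a rational multiple of `π`; moreover, this restricted sum is an
integer multiple of `π/3` or an integer multiple of `π/2`. -/
theorem splitting_theorem_residual (n : ℕ) (θ : Fin n → ℝ) (D : Fin n → ℤ) (q : Fin n → ℚ)
    (hsf : ∀ i, Squarefree (D i))
    (hcos : ∀ i, ∃ c : ℚ, Real.cos (θ i) = c)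
    (hsin : ∀ i, Real.sin (θ i) = (q i : ℝ) * Real.sqrt (D i))
    (hsum : ∃ r : ℚ, ∑ i, θ i = (r : ℝ) * Real.pi) (d : ℤ) :
    (∃ r : ℚ, ∑ i ∈ Finset.univ.filter (fun i => D i = d), θ i = (r : ℝ) * Real.pi) ∧
    ((∃ k : ℤ, ∑ i ∈ Finset.univ.filter (fun i => D i = d), θ i = (k : ℝ) * (Real.pi / 3)) ∨
     (∃ k : ℤ, ∑ i ∈ Finset.univ.filter (fun i => D i = d), θ i = (k : ℝ) * (Real.pi / 2))) := by
  classical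
  set α : ℤ → ℝ := fun d => ∑ i ∈ Finset.univ.filter (fun i => D i = d), θ i with hαdef
  change (∃ r : ℚ, α d = (r : ℝ) * Real.pi) ∧
    ((∃ k : ℤ, α d = (k : ℝ) * (Real.pi / 3)) ∨ (∃ k : ℤ, α d = (k : ℝ) * (Real.pi / 2)))
  have hres : ∀ d, ∃ a b : ℚ, Real.cos (α d) = a ∧ Real.sin (α d) = b * Real.sqrt d := by
    intro d
    refine residual_sum θ d _ fun i hi => ?_
    obtain ⟨c, hc⟩ := hcos i
    exact ⟨c, q i, hc, by rw [hsin i, (Finset.mem_filter.mp hi).2]⟩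
  suffices hrat : ∃ r : ℚ, α d = (r : ℝ) * Real.pi by
    obtain ⟨a, _, ha, _⟩ := hres d
    exact ⟨hrat, niven_angle _ hrat ⟨a, ha⟩⟩
  by_cases hd : d ∈ Finset.univ.image D
  swap
  · refine ⟨0, ?_⟩
    have : Finset.univ.filter (fun i => D i = d) = ∅ :=
      Finset.filter_eq_empty_iff.mpr fun i _ h =>
        hd (Finset.mem_image.mpr ⟨i, Finset.mem_univ i, h⟩)
    simp [hαdef, this]
  choose w a b hw hexp hnorm using fun d => exp_residual (α d) d (hres d)
  -- The field of algebraic numbers in `ℂ` is Galois over `ℚ`; everything takes place there.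
  let K := algebraicClosure ℚ ℂ
  have : IsAlgClosure ℚ K := algebraicClosure.isAlgClosure ℚ ℂ
  have hgal : IsGalois ℚ K := IsAlgClosure.isGalois ℚ K
  have hwK : ∀ d, w d ∈ K := fun d => mem_algebraicClosure_iff.mpr <|
    IsAlgebraic.of_pow two_pos (by rw [hw d]; exact isAlgebraic_intCast _)
  let wK : ℤ → K := fun d => ⟨w d, hwK d⟩
  let zK : ℤ → K := fun d => algebraMap ℚ K (a d) + algebraMap ℚ K (b d) * wK d
  have hzK : ∀ d, (zK d : ℂ) = Complex.exp (α d * Complex.I) := by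
    intro d
    rw [hexp d]
    simp [zK, wK]
  have hfin : ∀ x : K, IsOfFinOrder x ↔ IsOfFinOrder (x : ℂ) := by
    intro x
    simp only [isOfFinOrder_iff_pow_eq_one, ← IntermediateField.coe_pow, OneMemClass.coe_eq_one]
  have hprod : IsOfFinOrder (∏ c ∈ Finset.univ.image D, zK c) := by
    rw [hfin, SubmonoidClass.coe_finsetProd, Finset.prod_congr rfl fun c _ => hzK c,
      ← Complex.exp_sum, ← Finset.sum_mul, ← Complex.ofReal_sum, isOfFinOrder_exp_iff]
    rwa [Finset.sum_fiberwise_of_maps_to fun i _ => Finset.mem_image_of_mem D (Finset.mem_univ i)]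
  have hall := isOfFinOrder_of_prod wK zK a b
    (fun d => Subtype.ext (by simpa [wK] using hw d)) (fun d => rfl)
    (fun d => Subtype.ext (by simpa [zK, wK] using hnorm d)) (Finset.univ.image D)
    (fun c hc => by
      obtain ⟨i, _, rfl⟩ := Finset.mem_image.mp hc
      exact hsf i) hprod d hd
  rwa [hfin, hzK, isOfFinOrder_exp_iff] at hall
end

section
/- Let θ₀, …, θ_{n−1} be real numbers and D₀, …, D_{n−1} squarefree integers such that for each i, cos θᵢ is rational and sin θᵢ = qᵢ·√(Dᵢ) for some rational number qᵢ (each θᵢ has residual Dᵢ). If θ₀ + ⋯ + θ_{n−1} = 2πk for some integer k, then for every integer d there exists an integer m such that ∑_{i : Dᵢ = d} θᵢ = m·π. (In an embedding of a wheel graph with integer edge lengths, the central angles corresponding to a given residual add up to an integer multiple of π.) -/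
/-!
Grouping the angles by residual, let `S d` be the sum of the angles of residual `d`. For `d > 0` the
number `z d = exp (i * S d)` lies on the unit circle and has the form `a + b * √(-d)` with `a`, `b`
rational; for `d < 0` the junk value `√d = 0` makes `S d` a multiple of `π` outright. The
hypothesis therefore yields `∏ (z d) ^ 2 = 1` over the positive residuals.

A Galois automorphism sends `z d` to itself or to its conjugate `(z d)⁻¹`, according to its sign on
`√(-d)`. For `d ≠ e` the number `√(-d) * √(-e)` is irrational, so some automorphism `σ` acts with
different signs on the two roots. Multiplying or dividing the relation by its image under `σ` then
squares some of the factors and cancels the others, and one can choose to keep `z e` and cancel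
`z d`. Iterating isolates a single factor (`pow_two_pow_eq_one_of_prod`): each `z e` is a root of
unity of `2`-power order. In `ℚ(√(-e))` with `e ≠ 1` the only such roots of unity are `±1`, since
`-1` is not a square there (`eq_one_or_neg_one_of_pow`). Hence `S e` is a multiple of `π` for every
`e ≠ 1`, and `S 1`, where `z 1 = ±i` is not excluded by this argument, is a multiple of `π` because
the total is.
-/

/-! ### Multiplicative independence of imaginary quadratic norm one elements -/

/-- Distinct squarefree integers, one of them positive, have distinct classes in `ℚˣ / (ℚˣ)²`. -/
lemma eq_of_mul_eq_rat_sq {d e : ℤ} (hd : 0 < d) (sd : Squarefree d)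
    (se : Squarefree e) {r : ℚ} (h : r ^ 2 = d * e) : d = e := by
  have hsq : IsSquare (((d * e : ℤ)) : ℚ) := ⟨r, by push_cast; rw [← h, sq]⟩
  obtain ⟨t, ht⟩ := Rat.isSquare_intCast_iff.1 hsq
  have hdt : d ∣ t := by
    rw [← sd.dvd_pow_iff_dvd (n := 2) two_ne_zero, sq, ← ht]
    exact dvd_mul_right _ _
  obtain ⟨u, rfl⟩ := hdt
  have heu : e = d * (u * u) := by
    apply mul_left_cancel₀ hd.ne'
    rw [ht]; ring
  have hu : IsUnit u := se u ⟨d, by rw [heu]; ring⟩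
  have : u * u = 1 := by rcases Int.isUnit_iff.1 hu with rfl | rfl <;> rfl
  rw [heu, this, mul_one]

/-- Some automorphism acts with different signs on `√(-d)` and `√(-e)` when `d ≠ e`: their product
is irrational with rational square. -/
lemma exists_galois_sign_ne {L : Type*} [Field L] [Algebra ℚ L] [IsGalois ℚ L] {d e : ℤ}
    (hd : 0 < d) (sd : Squarefree d) (se : Squarefree e) (hde : d ≠ e)
    {x y : L} (hx : x ^ 2 = -(d : L)) (hy : y ^ 2 = -(e : L)) :
    ∃ σ : L ≃ₐ[ℚ] L, σ (x * y) = -(x * y) := by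
  have hxy : (x * y) ^ 2 = (d : L) * e := by rw [mul_pow, hx, hy]; ring
  by_contra! hσ
  have hmem : x * y ∈ (⊥ : IntermediateField ℚ L) := by
    rw [InfiniteGalois.mem_bot_iff_fixed]
    intro σ
    have h2 : (σ (x * y)) ^ 2 = (x * y) ^ 2 := by rw [← map_pow, hxy]; simp
    exact (sq_eq_sq_iff_eq_or_eq_neg.1 h2).resolve_right (hσ σ)
  obtain ⟨r, hr⟩ := IntermediateField.mem_bot.1 hmem
  refine hde (eq_of_mul_eq_rat_sq hd sd se (r := r) ?_)
  apply (algebraMap ℚ L).injective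
  rw [map_pow, hr, hxy, map_mul, map_intCast, map_intCast]

/-- Isolating one factor of a multiplicative relation between norm one elements
`z d = a d + b d * s d` of distinct imaginary quadratic fields, where `s d = √(-d)`. -/
lemma pow_two_pow_eq_one_of_prod {L : Type*} [Field L] [Algebra ℚ L] [IsGalois ℚ L]
    (s z : ℤ → L) (a b : ℤ → ℚ) (e : ℤ) (T : Finset ℤ)
    (hpos : ∀ d ∈ T, 0 < d) (hsf : ∀ d ∈ T, Squarefree d)
    (hs : ∀ d ∈ T, s d ^ 2 = -(d : L))
    (hz : ∀ d ∈ T, z d = algebraMap ℚ L (a d) + algebraMap ℚ L (b d) * s d)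
    (hn : ∀ d ∈ T, a d ^ 2 + b d ^ 2 * d = 1)
    (heT : e ∈ T) (j : ℕ) (hprod : ∏ d ∈ T, z d ^ 2 ^ j = 1) :
    ∃ j : ℕ, z e ^ 2 ^ j = 1 := by
  induction T using Finset.strongInduction generalizing j with
  | H T ih =>
  by_cases hT : ∃ f ∈ T, f ≠ e
  swap
  · push Not at hT
    have : T = {e} := Finset.eq_singleton_iff_unique_mem.2 ⟨heT, hT⟩
    exact ⟨j, by simpa [this] using hprod⟩
  obtain ⟨f, hf, hfe⟩ := hT
  have : CharZero L := algebraRat.charZero L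
  have hs0 : ∀ d ∈ T, s d ≠ 0 := by
    intro d hd h0
    have := hs d hd
    rw [h0] at this
    have h1 : (d : L) = 0 := by linear_combination this
    exact (hpos d hd).ne' (by exact_mod_cast h1)
  obtain ⟨σ, hσ⟩ := exists_galois_sign_ne (hpos f hf) (hsf f hf) (hsf e heT) hfe
    (hs f hf) (hs e heT)
  have hsign : ∀ d ∈ T, σ (s d) = s d ∨ σ (s d) = -s d := by
    intro d hd
    apply sq_eq_sq_iff_eq_or_eq_neg.1
    rw [← map_pow, hs d hd]; simp
  have hnL : ∀ d ∈ T, (algebraMap ℚ L (a d)) ^ 2 + (algebraMap ℚ L (b d)) ^ 2 * d = 1 := by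
    intro d hd
    have := congrArg (algebraMap ℚ L) (hn d hd)
    simpa using this
  have hfix : ∀ d ∈ T, σ (s d) = s d → σ (z d) = z d := by
    intro d hd h
    rw [hz d hd, map_add, map_mul, h, AlgEquiv.commutes, AlgEquiv.commutes]
  have hflip : ∀ d ∈ T, σ (s d) = -s d → z d * σ (z d) = 1 := by
    intro d hd h
    rw [hz d hd, map_add, map_mul, h, AlgEquiv.commutes, AlgEquiv.commutes]
    linear_combination hnL d hd - (algebraMap ℚ L (b d)) ^ 2 * hs d hd
  have hz0 : ∀ d ∈ T, z d ≠ 0 := by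
    intro d hd h0
    have : (z d) * (algebraMap ℚ L (a d) - algebraMap ℚ L (b d) * s d) = 1 := by
      rw [hz d hd]
      linear_combination hnL d hd - (algebraMap ℚ L (b d)) ^ 2 * hs d hd
    simp [h0] at this
  have hprodσ : ∏ d ∈ T, σ (z d) ^ 2 ^ j = 1 := by
    have := congrArg σ hprod
    simpa [map_prod] using this
  -- It suffices to square the factors in a subset containing `e` but not `f`, cancelling the rest.
  have key : ∀ P : ℤ → Prop, P e → ¬ P f →
      (∀ w : ℤ → L, (∀ d ∈ T, P d → w d = z d ^ 2) → (∀ d ∈ T, ¬ P d → w d = 1) →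
        ∏ d ∈ T, w d ^ 2 ^ j = 1) → ∃ j : ℕ, z e ^ 2 ^ j = 1 := by
    classical
    intro P hPe hPf hw
    have hsub : T.filter P ⊆ T := Finset.filter_subset _ _
    have hss : T.filter P ⊂ T := by
      rw [Finset.filter_ssubset]
      exact ⟨f, hf, hPf⟩
    refine ih (T.filter P) hss (fun d hd => hpos d (hsub hd)) (fun d hd => hsf d (hsub hd))
      (fun d hd => hs d (hsub hd)) (fun d hd => hz d (hsub hd)) (fun d hd => hn d (hsub hd))
      (Finset.mem_filter.2 ⟨heT, hPe⟩) (j + 1) ?_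
    have := hw (fun d => if P d then z d ^ 2 else 1) (fun d _ h => if_pos h)
      (fun d _ h => if_neg h)
    rw [Finset.prod_filter]
    refine Eq.trans ?_ this
    refine Finset.prod_congr rfl fun d _ => ?_
    by_cases hPd : P d
    · simp only [if_pos hPd]
      rw [← pow_mul, pow_succ']
    · simp only [if_neg hPd, one_pow]
  rw [map_mul] at hσ
  have hfe0 : s f * s e ≠ 0 := mul_ne_zero (hs0 f hf) (hs0 e heT)
  rcases hsign e heT with h | h
  · refine key (fun d => σ (s d) = s d) h ?_ ?_
    · intro h'
      rw [h, h'] at hσ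
      exact hfe0 (self_eq_neg.1 hσ)
    · intro w h1 h2
      calc ∏ d ∈ T, w d ^ 2 ^ j = ∏ d ∈ T, z d ^ 2 ^ j * σ (z d) ^ 2 ^ j := by
            refine Finset.prod_congr rfl fun d hd => ?_
            rw [← mul_pow]
            congr 1
            by_cases hP : σ (s d) = s d
            · rw [h1 d hd hP, hfix d hd hP, sq]
            · rw [h2 d hd hP, hflip d hd ((hsign d hd).resolve_left hP)]
        _ = 1 := by rw [Finset.prod_mul_distrib, hprod, hprodσ, one_mul]
  · refine key (fun d => σ (s d) = -s d) h ?_ ?_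
    · intro h'
      rw [h, h'] at hσ
      exact hfe0 (self_eq_neg.1 (by linear_combination hσ))
    · intro w h1 h2
      calc ∏ d ∈ T, w d ^ 2 ^ j = ∏ d ∈ T, z d ^ 2 ^ j / σ (z d) ^ 2 ^ j := by
            refine Finset.prod_congr rfl fun d hd => ?_
            rw [← div_pow]
            congr 1
            by_cases hP : σ (s d) = -s d
            · rw [h1 d hd hP, eq_inv_of_mul_eq_one_right (hflip d hd hP), div_inv_eq_mul, sq]
            · rw [h2 d hd hP, hfix d hd ((hsign d hd).resolve_right hP), div_self (hz0 d hd)]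
        _ = 1 := by rw [Finset.prod_div_distrib, hprod, hprodσ, div_one]

/-! ### Roots of unity of `2`-power order in imaginary quadratic fields -/

/-- For a positive squarefree `e ≠ 1`, the only roots of unity of `2`-power order in `ℚ(√(-e))` are
`±1`. -/
lemma eq_one_or_neg_one_of_pow {e : ℤ} (he : 0 < e) (se : Squarefree e) (he1 : e ≠ 1) (j : ℕ) :
    ∀ (a b : ℚ) (z : ℂ), z = a + b * (Real.sqrt e * Complex.I) → z ^ 2 ^ j = 1 →
      z = 1 ∨ z = -1 := by
  have hsq : Real.sqrt e * Real.sqrt e = e := Real.mul_self_sqrt (by exact_mod_cast he.le)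
  have hs0 : Real.sqrt e ≠ 0 := by
    have : (0 : ℝ) < e := by exact_mod_cast he
    positivity
  induction j with
  | zero => intro a b z _ h; left; simpa using h
  | succ j ih =>
    intro a b z hz h
    have hsqC : (Real.sqrt e : ℂ) * Real.sqrt e = e := by exact_mod_cast hsq
    have hz2 : z ^ 2 = ((a ^ 2 - b ^ 2 * e : ℚ) : ℂ)
        + ((2 * a * b : ℚ) : ℂ) * (Real.sqrt e * Complex.I) := by
      rw [hz]; push_cast
      linear_combination (b : ℂ) ^ 2 * (Complex.I ^ 2 * hsqC + e * Complex.I_sq)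
    rw [pow_succ', pow_mul] at h
    rcases ih _ _ _ hz2 h with h1 | h1
    · exact sq_eq_sq_iff_eq_or_eq_neg.1 (by rw [h1, one_pow])
    · exfalso
      rw [h1] at hz2
      have hre : (-1 : ℝ) = ((a ^ 2 - b ^ 2 * e : ℚ) : ℝ) := by
        simpa [-Rat.cast_sub, -Rat.cast_mul] using congrArg Complex.re hz2
      have him : (0 : ℝ) = ((2 * a * b : ℚ) : ℝ) * Real.sqrt e := by
        simpa [-Rat.cast_sub, -Rat.cast_mul] using congrArg Complex.im hz2
      have hre' : -1 = a ^ 2 - b ^ 2 * e := by exact_mod_cast hre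
      have hab : 2 * a * b = 0 := by
        exact_mod_cast (mul_eq_zero.1 him.symm).resolve_right hs0
      rcases mul_eq_zero.1 hab with ha | hb
      · have ha : a = 0 := by linarith
        refine he1 (eq_of_mul_eq_rat_sq he se squarefree_one (r := b * e) ?_)
        rw [ha] at hre'
        push_cast
        linear_combination (e : ℚ) * hre'
      · rw [hb] at hre'
        nlinarith [sq_nonneg a]

/-! ### The relation among complex numbers -/

/-- The relation lemma over `ℂ`, where `√(-d)` is `i * √d`. -/
lemma complex_pow_two_pow_eq_one_of_prod
    (z : ℤ → ℂ) (a b : ℤ → ℚ) (e : ℤ) (T : Finset ℤ)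
    (hpos : ∀ d ∈ T, 0 < d) (hsf : ∀ d ∈ T, Squarefree d)
    (hz : ∀ d ∈ T, z d = a d + b d * (Real.sqrt d * Complex.I))
    (hn : ∀ d ∈ T, a d ^ 2 + b d ^ 2 * d = 1)
    (heT : e ∈ T) (j : ℕ) (hprod : ∏ d ∈ T, z d ^ 2 ^ j = 1) :
    ∃ j : ℕ, z e ^ 2 ^ j = 1 := by
  -- All the numbers involved lie in the field of algebraic numbers, which is Galois over `ℚ`.
  let L := algebraicClosure ℚ ℂ
  have : IsAlgClosure ℚ L := algebraicClosure.isAlgClosure ℚ ℂ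
  have : Normal ℚ L := IsAlgClosure.normal ℚ L
  have : IsGalois ℚ L := ⟨⟩
  have hroot : ∀ d : ℤ, ∃ s : L, 0 < d → (s : ℂ) = Real.sqrt d * Complex.I ∧ s ^ 2 = -(d : L) := by
    intro d
    by_cases hd : 0 < d
    · have hsq : (Real.sqrt d : ℂ) * Real.sqrt d = d := by
        have : Real.sqrt d * Real.sqrt d = d := Real.mul_self_sqrt (by exact_mod_cast hd.le)
        exact_mod_cast this
      have h2 : (Real.sqrt d * Complex.I : ℂ) ^ 2 = -(d : ℂ) := by
        linear_combination Complex.I ^ 2 * hsq + d * Complex.I_sq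
      have hmem : (Real.sqrt d * Complex.I : ℂ) ∈ L := by
        refine mem_algebraicClosure_iff.2 (IsAlgebraic.of_pow two_pos ?_)
        rw [h2]
        exact (isAlgebraic_intCast d).neg
      refine ⟨⟨_, hmem⟩, fun _ => ⟨rfl, ?_⟩⟩
      apply Subtype.ext
      simpa using h2
    · exact ⟨0, fun h => absurd h hd⟩
  choose s hs using hroot
  have hzL : ∀ d ∈ T, ((algebraMap ℚ L (a d) + algebraMap ℚ L (b d) * s d : L) : ℂ) = z d := by
    intro d hd
    rw [hz d hd, ← (hs d (hpos d hd)).1]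
    simp
  obtain ⟨k, hk⟩ := pow_two_pow_eq_one_of_prod (L := L) s
    (fun d => algebraMap ℚ L (a d) + algebraMap ℚ L (b d) * s d) a b e T hpos hsf
    (fun d hd => (hs d (hpos d hd)).2) (fun _ _ => rfl) hn heT j (by
      apply Subtype.ext
      rw [← IntermediateField.coe_val, map_prod, map_one, ← hprod]
      refine Finset.prod_congr rfl fun d hd => ?_
      rw [map_pow, IntermediateField.coe_val, hzL d hd])
  refine ⟨k, ?_⟩
  have := congrArg L.val hk
  rwa [map_pow, map_one, IntermediateField.coe_val, hzL e heT] at this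

/-! ### Sums of angles with a given residual -/

/-- A sum of angles of residual `d` again has rational cosine and sine in `ℚ * √d`. -/
lemma cos_sin_sum {ι : Type*} (A : Finset ι) (θ : ι → ℝ) (q : ι → ℚ) (d : ℤ)
    (hcos : ∀ i, ∃ c : ℚ, Real.cos (θ i) = c)
    (hsin : ∀ i ∈ A, Real.sin (θ i) = (q i : ℝ) * Real.sqrt d) :
    ∃ a b : ℚ, Real.cos (∑ i ∈ A, θ i) = a ∧ Real.sin (∑ i ∈ A, θ i) = b * Real.sqrt d := by
  classical
  obtain ⟨r, hr⟩ : ∃ r : ℚ, Real.sqrt d * Real.sqrt d = r := by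
    rcases le_total 0 d with h | h
    · exact ⟨d, by rw [Real.mul_self_sqrt (by exact_mod_cast h)]; simp⟩
    · exact ⟨0, by rw [Real.sqrt_eq_zero_of_nonpos (by exact_mod_cast h)]; simp⟩
  induction A using Finset.induction_on with
  | empty => exact ⟨1, 0, by simp, by simp⟩
  | insert i A hi ih =>
    obtain ⟨a, b, ha, hb⟩ := ih fun k hk => hsin k (Finset.mem_insert_of_mem hk)
    obtain ⟨c, hc⟩ := hcos i
    have hq := hsin i (Finset.mem_insert_self i A)
    refine ⟨c * a - q i * b * r, q i * a + c * b, ?_, ?_⟩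
    · rw [Finset.sum_insert hi, Real.cos_add, ha, hb, hc, hq]
      push_cast
      linear_combination (-(q i : ℝ) * b) * hr
    · rw [Finset.sum_insert hi, Real.sin_add, ha, hb, hc, hq]
      push_cast
      ring


/-- If each angle `θ i` has residual given by the squarefree integer `D i`
(that is, `cos (θ i)` is rational and `sin (θ i) = q i · √(D i)` for a rational
`q i`) and the angles sum to an integer multiple of `2π`, then for every
integer `d` the angles of residual `d` add up to an integer multiple of `π`. -/
theorem sum_residual_angles_multiple_of_pi (n : ℕ) (θ : Fin n → ℝ) (D : Fin n → ℤ)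
    (q : Fin n → ℚ)
    (hsf : ∀ i, Squarefree (D i))
    (hcos : ∀ i, ∃ c : ℚ, Real.cos (θ i) = c)
    (hsin : ∀ i, Real.sin (θ i) = (q i : ℝ) * Real.sqrt (D i))
    (hsum : ∃ k : ℤ, ∑ i, θ i = 2 * Real.pi * k) (d : ℤ) :
    ∃ m : ℤ, ∑ i ∈ Finset.univ.filter (fun i => D i = d), θ i = (m : ℝ) * Real.pi := by
  classical
  obtain ⟨k, hk⟩ := hsum
  set S : ℤ → ℝ := fun d => ∑ i ∈ Finset.univ.filter (fun i => D i = d), θ i with hS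
  -- The residuals that occur.
  let U : Finset ℤ := Finset.univ.image D
  have hUsf : ∀ e ∈ U, Squarefree e := by
    intro e he
    obtain ⟨i, -, rfl⟩ := Finset.mem_image.1 he
    exact hsf i
  have htotal : ∑ e ∈ U, S e = 2 * Real.pi * k := by
    rw [← hk]
    exact Finset.sum_fiberwise_of_maps_to (fun i _ => Finset.mem_image_of_mem D (Finset.mem_univ i)) θ
  have hform : ∀ e, ∃ a b : ℚ, Real.cos (S e) = a ∧ Real.sin (S e) = b * Real.sqrt e := by
    intro e
    refine cos_sin_sum _ θ q e hcos fun i hi => ?_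
    rw [hsin i, (Finset.mem_filter.1 hi).2]
  choose a b hab using hform
  have of_sin : ∀ e, Real.sin (S e) = 0 → ∃ m : ℤ, S e = m * Real.pi := by
    intro e he
    obtain ⟨m, hm⟩ := Real.sin_eq_zero_iff.1 he
    exact ⟨m, hm.symm⟩
  have hneg : ∀ e ≤ 0, Real.sin (S e) = 0 := by
    intro e he
    rw [(hab e).2, Real.sqrt_eq_zero_of_nonpos (by exact_mod_cast he), mul_zero]
  have hz : ∀ e, Complex.exp (S e * Complex.I) = a e + b e * (Real.sqrt e * Complex.I) := by
    intro e
    rw [Complex.exp_mul_I, ← Complex.ofReal_cos, ← Complex.ofReal_sin, (hab e).1, (hab e).2]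
    push_cast
    ring
  have hnorm : ∀ e, 0 < e → a e ^ 2 + b e ^ 2 * e = 1 := by
    intro e he
    have h1 := Real.cos_sq_add_sin_sq (S e)
    rw [(hab e).1, (hab e).2, mul_pow, Real.sq_sqrt (by exact_mod_cast he.le)] at h1
    exact_mod_cast h1
  -- Squaring removes the factors `±1` contributed by the negative residuals.
  have hprod : ∏ e ∈ U.filter (fun e => 0 < e), Complex.exp (S e * Complex.I) ^ 2 ^ 1 = 1 := by
    have hall : ∏ e ∈ U, Complex.exp (S e * Complex.I) ^ 2 ^ 1 = 1 := by
      rw [Finset.prod_pow, ← Complex.exp_sum, ← Finset.sum_mul, ← Complex.ofReal_sum, htotal]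
      have : Complex.exp (((2 * Real.pi * k : ℝ) : ℂ) * Complex.I) = 1 :=
        Complex.exp_eq_one_iff.2 ⟨k, by push_cast; ring⟩
      rw [this, one_pow]
    rw [Finset.prod_filter]
    refine Eq.trans ?_ hall
    refine Finset.prod_congr rfl fun e _ => ?_
    split_ifs with he
    · rfl
    · obtain ⟨m, hm⟩ := of_sin e (hneg e (not_lt.1 he))
      rw [pow_one, ← Complex.exp_nat_mul, hm]
      refine (Complex.exp_eq_one_iff.2 ⟨m, ?_⟩).symm
      push_cast
      ring
  have hne : ∀ e ∈ U, e ≠ 1 → ∃ m : ℤ, S e = m * Real.pi := by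
    intro e he he1
    apply of_sin
    rcases le_or_gt e 0 with h | h
    · exact hneg e h
    obtain ⟨j, hj⟩ := complex_pow_two_pow_eq_one_of_prod (fun e => Complex.exp (S e * Complex.I))
      a b e (U.filter fun e => 0 < e) (fun d hd => (Finset.mem_filter.1 hd).2)
      (fun d hd => hUsf d (Finset.mem_filter.1 hd).1) (fun d _ => hz d)
      (fun d hd => hnorm d (Finset.mem_filter.1 hd).2) (Finset.mem_filter.2 ⟨he, h⟩) 1 hprod
    have him : (Complex.exp (S e * Complex.I)).im = Real.sin (S e) :=
      Complex.exp_ofReal_mul_I_im _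
    rw [← him]
    rcases eq_one_or_neg_one_of_pow h (hUsf e he) he1 j _ _ _ (hz e) hj with h1 | h1 <;>
      rw [h1] <;> simp
  by_cases hdU : d ∈ U
  swap
  · refine ⟨0, ?_⟩
    rw [Finset.sum_eq_zero]
    · simp
    · intro i hi
      exact absurd (Finset.mem_image.2 ⟨i, Finset.mem_univ i, (Finset.mem_filter.1 hi).2⟩) hdU
  by_cases hd1 : d = 1
  · have hrest : ∀ e, ∃ m : ℤ, e ∈ U.erase d → S e = m * Real.pi := by
      intro e
      by_cases he : e ∈ U.erase d
      · obtain ⟨m, hm⟩ := hne e (Finset.mem_of_mem_erase he) (hd1 ▸ Finset.ne_of_mem_erase he)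
        exact ⟨m, fun _ => hm⟩
      · exact ⟨0, fun h => absurd h he⟩
    choose m hm using hrest
    refine ⟨2 * k - ∑ e ∈ U.erase d, m e, ?_⟩
    have h1 : S d + ∑ e ∈ U.erase d, S e = 2 * Real.pi * k := by
      rw [Finset.add_sum_erase U S hdU, htotal]
    rw [Finset.sum_congr rfl hm, ← Finset.sum_mul] at h1
    change S d = _
    push_cast
    linear_combination h1
  · exact hne d hdU hd1
end

section
/- If a, b, c are odd integers, D is a squarefree integer, and there exists a nonzero integer k with 4a²b² − (a² + b² − c²)² = k²·D, then D ≡ 3 (mod 8). (The characteristic of a nondegenerate triangle with odd integer side lengths is congruent to 3 modulo 8.) -/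
/-!
Odd squares are `1` modulo `8`, so `4a²b² − (a² + b² − c²)²` is `4 − 1 = 3` modulo `8`.
In particular it is odd, so any square factor `k²` of it is an odd square, again `1` modulo `8`,
and the cofactor `D` is `3` modulo `8`.
-/

/-- The square of an odd integer is `1` modulo `8`. -/
lemma odd_sq_eq_eight_mul_add_one {x : ℤ} (hx : Odd x) : ∃ m, x ^ 2 = 8 * m + 1 := by
  obtain ⟨m, hm⟩ := Int.eight_dvd_sq_sub_one_of_odd hx
  exact ⟨m, by linarith⟩

/-- The characteristic of a nondegenerate triangle with odd integer side
lengths is congruent to `3` modulo `8`: if `a, b, c` are odd integers, `D` is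
squarefree, and `4a²b² − (a² + b² − c²)² = k²·D` for some nonzero integer `k`,
then `D ≡ 3 (mod 8)`. -/
theorem char_of_odd_triangle_mod_eight (a b c D k : ℤ)
    (ha : Odd a) (hb : Odd b) (hc : Odd c)
    (hsf : Squarefree D) (hk : k ≠ 0)
    (h : 4 * a ^ 2 * b ^ 2 - (a ^ 2 + b ^ 2 - c ^ 2) ^ 2 = k ^ 2 * D) :
    D % 8 = 3 := by
  obtain ⟨m, hm⟩ := odd_sq_eq_eight_mul_add_one ha
  obtain ⟨n, hn⟩ := odd_sq_eq_eight_mul_add_one hb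
  obtain ⟨p, hp⟩ := odd_sq_eq_eight_mul_add_one hc
  -- As odd squares are `1` modulo `8`, the left-hand side is `4 - 1 = 3` modulo `8`.
  have hmod : k ^ 2 * D = 8 * (4 * (8 * m * n + m + n) - 8 * (m + n - p) ^ 2
      - 2 * (m + n - p)) + 3 := by
    rw [← h, hm, hn, hp]
    ring
  -- Hence `k` is odd, so `k ^ 2` is also `1` modulo `8` and can be cancelled.
  have hkodd : Odd k := by
    have hodd : Odd (k ^ 2 * D) := by
      rw [hmod, Int.odd_iff]
      omega
    exact (Int.odd_pow' two_ne_zero).mp (Int.Odd.of_mul_left hodd)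
  obtain ⟨q, hq⟩ := odd_sq_eq_eight_mul_add_one hkodd
  have hD : D = k ^ 2 * D - 8 * (q * D) := by
    rw [hq]
    ring
  omega
end

section
/- Suppose D is a squarefree integer with D ≡ 3 (mod 8), and φ is a real number such that cos φ is rational and sin φ = q·√D for some rational number q (φ has residual D). Then there exist integers m and p with p ≡ 1 (mod 8), cos φ = m/(2p), and m not divisible by 4 (so m mod 8 ∈ {1,2,3,5,6,7}). Moreover, the residue of m modulo 8 is uniquely determined by φ: if also cos φ = m'/(2p') with integers m', p' and p' ≡ 1 (mod 8), then m' ≡ m (mod 8). -/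
/-!
Writing `cos φ = a/n` and `q = b/n` over a common denominator, the identity `cos² + sin² = 1` becomes
`a² + D b² = n²` with `n ≠ 0` (for `D < 0` the junk value `√D = 0` forces `sin φ = 0`, so `b = 0`
works). After cancelling common factors `2`, the congruence `a² + 3 b² ≡ n² (mod 8)` leaves two cases:
`a` and `n` are odd, and then `a/n = (2an)/(2n²)`; or `a` is odd and `n = 2k` with `k` odd, and then
`a/n = (ak)/(2k²)`. Odd squares are `1` modulo `8`, so `p = n²`, respectively `p = k²`, is a valid
denominator, and `m` is `2` modulo `4`, respectively odd (`exists_class_rep`).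

Uniqueness of `m` modulo `8` is the equation `m p' = m' p` read modulo `8`.
-/

lemma sq_emod_eight (x : ℤ) :
    (x % 4 = 0 ∧ x ^ 2 % 8 = 0) ∨ (x % 4 = 2 ∧ x ^ 2 % 8 = 4) ∨ (x % 2 = 1 ∧ x ^ 2 % 8 = 1) := by
  have h : x % 8 = 0 ∨ x % 8 = 1 ∨ x % 8 = 2 ∨ x % 8 = 3 ∨ x % 8 = 4 ∨ x % 8 = 5 ∨ x % 8 = 6 ∨
      x % 8 = 7 := by omega
  have h2 : x ^ 2 % 8 = (x % 8) * (x % 8) % 8 := by rw [pow_two, Int.mul_emod]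
  rcases h with h | h | h | h | h | h | h | h <;> rw [h] at h2 <;> omega

lemma odd_mul_odd_emod {x y : ℤ} (hx : x % 2 = 1) (hy : y % 2 = 1) : x * y % 2 = 1 := by
  simp [Int.mul_emod, hx, hy]

/-- The fraction `a/n`, stated as the cross-multiplied identity `a * (2 * p) = m * n`, has the
form `m/(2p)` with `p ≡ 1 (mod 8)` and `4 ∤ m`. The bound `N` carries the descent that cancels common
factors `2` of `a`, `b`, `n`. -/
lemma exists_class_rep (D : ℤ) (hD : D % 8 = 3) (N : ℕ) : ∀ a b n : ℤ, n.natAbs ≤ N → n ≠ 0 →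
    a ^ 2 + D * b ^ 2 = n ^ 2 →
    ∃ m p : ℤ, p % 8 = 1 ∧ a * (2 * p) = m * n ∧ ¬ (4 ∣ m) := by
  induction N with
  | zero => intro a b n h h0; omega
  | succ N ih =>
    intro a b n hN h0 h
    by_cases hev : a % 2 = 0 ∧ b % 2 = 0 ∧ n % 2 = 0
    · obtain ⟨ha, hb, hn⟩ := hev
      obtain ⟨a, rfl⟩ := Int.dvd_of_emod_eq_zero ha
      obtain ⟨b, rfl⟩ := Int.dvd_of_emod_eq_zero hb
      obtain ⟨n, rfl⟩ := Int.dvd_of_emod_eq_zero hn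
      obtain ⟨m, p, hp, hm, h4⟩ := ih a b n (by omega) (by omega) (by linarith)
      exact ⟨m, p, hp, by linear_combination 2 * hm, h4⟩
    · have hDb : D * b ^ 2 % 8 = 3 * (b ^ 2 % 8) % 8 := by rw [Int.mul_emod, hD]
      have key : a % 2 = 1 ∧ (n % 2 = 1 ∨ n % 4 = 2) := by
        rcases sq_emod_eight a with ha | ha | ha <;> rcases sq_emod_eight b with hb | hb | hb <;>
          rcases sq_emod_eight n with hn | hn | hn <;> omega
      obtain ⟨ha, hn | hn⟩ := key
      · refine ⟨2 * (a * n), n ^ 2, ?_, by ring, ?_⟩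
        · rcases sq_emod_eight n with h | h | h <;> omega
        · have := odd_mul_odd_emod ha hn
          omega
      · obtain ⟨k, rfl⟩ : (2 : ℤ) ∣ n := by omega
        have hk : k % 2 = 1 := by omega
        refine ⟨a * k, k ^ 2, ?_, by ring, ?_⟩
        · rcases sq_emod_eight k with h | h | h <;> omega
        · have := odd_mul_odd_emod ha hk
          omega


/-- If `D` is a squarefree integer with `D ≡ 3 (mod 8)` and the angle `φ` has
residual `D` (that is, `cos φ` is rational and `sin φ = q·√D` with `q`
rational), then `cos φ = m/(2p)` for some integers `m, p` with `p ≡ 1 (mod 8)`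
and `4 ∤ m` (so `m mod 8 ∈ {1,2,3,5,6,7}`); moreover the residue of `m`
modulo `8` (the *class* of `φ`) is uniquely determined by `φ`. -/
theorem class_of_angle_with_residual (D : ℤ) (hsf : Squarefree D) (hD : D % 8 = 3)
    (φ : ℝ) (q : ℚ)
    (hcos : ∃ c : ℚ, Real.cos φ = c)
    (hsin : Real.sin φ = (q : ℝ) * Real.sqrt D) :
    ∃ m p : ℤ, p % 8 = 1 ∧ Real.cos φ = (m : ℝ) / (2 * p) ∧ ¬ (4 ∣ m) ∧
      ∀ m' p' : ℤ, p' % 8 = 1 → Real.cos φ = (m' : ℝ) / (2 * p') → m' % 8 = m % 8 := by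
  obtain ⟨c, hc⟩ := hcos
  have hpyth : ∃ r : ℚ, c ^ 2 + D * r ^ 2 = 1 := by
    have h1 := Real.sin_sq_add_cos_sq φ
    rw [hc, hsin] at h1
    rcases le_total 0 D with h | h
    · refine ⟨q, ?_⟩
      rw [mul_pow, Real.sq_sqrt (by exact_mod_cast h)] at h1
      have h2 : (c : ℝ) ^ 2 + D * (q : ℝ) ^ 2 = 1 := by linarith
      exact_mod_cast h2
    · refine ⟨0, ?_⟩
      -- `√D` takes the junk value `0` here, so `cos φ = ±1`.
      rw [Real.sqrt_eq_zero_of_nonpos (by exact_mod_cast h)] at h1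
      have h2 : (c : ℝ) ^ 2 + D * (0 : ℝ) ^ 2 = 1 := by linarith
      exact_mod_cast h2
  obtain ⟨r, hr⟩ := hpyth
  have hcd : (c.den : ℚ) ≠ 0 := by exact_mod_cast c.den_nz
  have hrd : (r.den : ℚ) ≠ 0 := by exact_mod_cast r.den_nz
  have hint : (c.num * r.den) ^ 2 + D * (r.num * c.den) ^ 2 = ((c.den : ℤ) * r.den) ^ 2 := by
    have hc' := Rat.mul_den_eq_num c
    have hr' := Rat.mul_den_eq_num r
    have : ((c.num : ℚ) * r.den) ^ 2 + D * (r.num * c.den) ^ 2 = ((c.den : ℚ) * r.den) ^ 2 := by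
      rw [← hc', ← hr']
      linear_combination ((c.den : ℚ) * r.den) ^ 2 * hr
    exact_mod_cast this
  have hn0 : (c.den : ℤ) * r.den ≠ 0 := by
    exact_mod_cast mul_ne_zero c.den_nz r.den_nz
  obtain ⟨m, p, hp, hm, h4⟩ := exists_class_rep D hD _ _ _ _ le_rfl hn0 hint
  have hp0 : (p : ℝ) ≠ 0 := by
    have : p ≠ 0 := by omega
    exact_mod_cast this
  have hcos : Real.cos φ = (m : ℝ) / (2 * p) := by
    have hm' : (c.num : ℚ) * r.den * (2 * p) = m * (c.den * r.den) := by exact_mod_cast hm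
    have h2 : c * (2 * p) = m := by
      rw [← Rat.mul_den_eq_num c] at hm'
      apply mul_right_cancel₀ (mul_ne_zero hcd hrd)
      linear_combination hm'
    rw [hc, eq_div_iff (by positivity)]
    exact_mod_cast h2
  refine ⟨m, p, hp, hcos, h4, ?_⟩
  intro m' p' hp' h'
  have hp0' : (p' : ℝ) ≠ 0 := by
    have : p' ≠ 0 := by omega
    exact_mod_cast this
  have hcross : m' * p = m * p' := by
    rw [hcos, div_eq_div_iff (by positivity) (by positivity)] at h'
    have : (m' : ℝ) * p = m * p' := by linarith
    exact_mod_cast this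
  have h8 := congrArg (· % 8) hcross
  simpa [Int.mul_emod, hp, hp'] using h8
end

section
/- Let m₁, m₂, m₃, p₁, p₂, p₃ be integers with p₁ ≡ p₂ ≡ p₃ ≡ 1 (mod 8), and let θ, φ be real numbers with cos θ = m₁/(2p₁), cos φ = m₂/(2p₂), and cos(θ + φ) = m₃/(2p₃). Then m₁² + m₂² + m₃² − m₁·m₂·m₃ − 4 ≡ 0 (mod 8). -/
/-!
For all real `θ, φ`, the numbers `x = cos θ`, `y = cos φ`, `z = cos (θ + φ)` satisfy
`x² + y² + z² - 2xyz = 1`. Substituting the given fractions and multiplying by `4 (p₁p₂p₃)²` gives an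
identity between integers; reducing it modulo 8, where each `pᵢ` becomes `1`, gives the congruence.
-/

/-- The addition formula reads `z - xy = -sin θ sin φ`; squaring it eliminates the sines. -/
lemma cos_sq_add_cos_sq_add_cos_add_sq (θ φ : ℝ) :
    Real.cos θ ^ 2 + Real.cos φ ^ 2 + Real.cos (θ + φ) ^ 2
      - 2 * Real.cos θ * Real.cos φ * Real.cos (θ + φ) = 1 := by
  have hs : (Real.sin θ * Real.sin φ) ^ 2 = (1 - Real.cos θ ^ 2) * (1 - Real.cos φ ^ 2) := by
    rw [mul_pow, Real.sin_sq, Real.sin_sq]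
  rw [Real.cos_add]
  linear_combination hs

/-- If `cos θ = m₁/(2p₁)`, `cos φ = m₂/(2p₂)` and `cos (θ + φ) = m₃/(2p₃)`
with all `pᵢ ≡ 1 (mod 8)`, then `m₁² + m₂² + m₃² − m₁m₂m₃ − 4 ≡ 0 (mod 8)`. -/
theorem class_addition_congruence (m₁ m₂ m₃ p₁ p₂ p₃ : ℤ)
    (hp₁ : p₁ % 8 = 1) (hp₂ : p₂ % 8 = 1) (hp₃ : p₃ % 8 = 1)
    (θ φ : ℝ)
    (h₁ : Real.cos θ = (m₁ : ℝ) / (2 * p₁))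
    (h₂ : Real.cos φ = (m₂ : ℝ) / (2 * p₂))
    (h₃ : Real.cos (θ + φ) = (m₃ : ℝ) / (2 * p₃)) :
    (m₁ ^ 2 + m₂ ^ 2 + m₃ ^ 2 - m₁ * m₂ * m₃ - 4) % 8 = 0 := by
  have hcos := cos_sq_add_cos_sq_add_cos_add_sq θ φ
  have n₁ : (p₁ : ℝ) ≠ 0 := by
    have : p₁ ≠ 0 := by omega
    exact_mod_cast this
  have n₂ : (p₂ : ℝ) ≠ 0 := by
    have : p₂ ≠ 0 := by omega
    exact_mod_cast this
  have n₃ : (p₃ : ℝ) ≠ 0 := by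
    have : p₃ ≠ 0 := by omega
    exact_mod_cast this
  have e₁ : (m₁ : ℝ) = Real.cos θ * (2 * p₁) := by rw [h₁]; field_simp
  have e₂ : (m₂ : ℝ) = Real.cos φ * (2 * p₂) := by rw [h₂]; field_simp
  have e₃ : (m₃ : ℝ) = Real.cos (θ + φ) * (2 * p₃) := by rw [h₃]; field_simp
  have hint : m₁ ^ 2 * (p₂ * p₃) ^ 2 + m₂ ^ 2 * (p₁ * p₃) ^ 2 + m₃ ^ 2 * (p₁ * p₂) ^ 2
      - m₁ * m₂ * m₃ * (p₁ * p₂ * p₃) - 4 * (p₁ * p₂ * p₃) ^ 2 = 0 := by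
    have hreal : (m₁ : ℝ) ^ 2 * (p₂ * p₃) ^ 2 + m₂ ^ 2 * (p₁ * p₃) ^ 2 + m₃ ^ 2 * (p₁ * p₂) ^ 2
        - m₁ * m₂ * m₃ * (p₁ * p₂ * p₃) - 4 * (p₁ * p₂ * p₃) ^ 2 = 0 := by
      rw [e₁, e₂, e₃]
      linear_combination 4 * ((p₁ : ℝ) * p₂ * p₃) ^ 2 * hcos
    exact_mod_cast hreal
  have cast_one : ∀ p : ℤ, p % 8 = 1 → (p : ZMod 8) = 1 := fun p hp => by
    have := (ZMod.intCast_eq_intCast_iff p 1 8).2 hp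
    simpa using this
  have hmod := congrArg (Int.cast : ℤ → ZMod 8) hint
  push_cast at hmod
  rw [cast_one p₁ hp₁, cast_one p₂ hp₂, cast_one p₃ hp₃] at hmod
  apply Int.emod_eq_zero_of_dvd
  refine (ZMod.intCast_zmod_eq_zero_iff_dvd _ 8).1 ?_
  push_cast
  linear_combination hmod
end

section
/- Let A, B, C, A', B', C' be points in the Euclidean plane ℝ² such that all pairwise distances among these six points are integers (they lie in a common integral point set). Suppose D and D' are squarefree integers and k, k' are nonzero integers with 4·dist(A,B)²·dist(A,C)² − (dist(A,B)² + dist(A,C)² − dist(B,C)²)² = k²·D and 4·dist(A',B')²·dist(A',C')² − (dist(A',B')² + dist(A',C')² − dist(B',C')²)² = k'²·D' (so A, B, C and A', B', C' are non-collinear triples with characteristics D and D' respectively). Then D = D'. (The triangles spanned by any three non-collinear points of a plane integral point set have the same characteristic.) -/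
/-!
Write `u × v = u₀ v₁ - u₁ v₀`. The quantity `4|AB|²|AC|² - (|AB|² + |AC|² - |BC|²)²` is the square
of `2 (B - A) × (C - A)`. The Cauchy–Binet identity
`(u × v)(u' × v') = ⟨u, u'⟩⟨v, v'⟩ - ⟨u, v'⟩⟨v, u'⟩`, together with polarization
`2⟨Q - P, Q' - P'⟩ = |PQ'|² + |QP'|² - |PP'|² - |QQ'|²`, shows that the product of the two doubled
cross products is an integer `m`. Hence `m² = (k k')² D D'`, so `D D'` is a perfect square, and two
squarefree integers whose product is a perfect square are equal.
-/

/-- Two squarefree integers are equal if some nonzero square times their product is a square; no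
sign hypothesis is needed since the product is then automatically nonnegative. -/
lemma eq_of_squarefree_of_sq_eq {D D' r m : ℤ} (hD : Squarefree D) (hD' : Squarefree D')
    (hr : r ≠ 0) (h : m ^ 2 = r ^ 2 * (D * D')) : D = D' := by
  obtain ⟨n, rfl⟩ : r ∣ m := (Int.pow_dvd_pow_iff two_ne_zero).1 ⟨_, h⟩
  have hn : n ^ 2 = D * D' := mul_left_cancel₀ (pow_ne_zero 2 hr) (by rw [← h]; ring)
  obtain ⟨t, rfl⟩ : D ∣ n := (hD.dvd_pow_iff_dvd two_ne_zero).1 ⟨_, hn⟩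
  have ht : D' = D * (t * t) := mul_left_cancel₀ hD.ne_zero (by rw [← hn]; ring)
  have hu : t * t = 1 := Int.isUnit_mul_self (hD' t ⟨D, by rw [ht]; ring⟩)
  rw [ht, hu, mul_one]

lemma dist_sq_eq (P Q : EuclideanSpace ℝ (Fin 2)) :
    dist P Q ^ 2 = (P 0 - Q 0) ^ 2 + (P 1 - Q 1) ^ 2 := by
  rw [EuclideanSpace.dist_eq, Real.sq_sqrt (by positivity)]
  simp [Fin.sum_univ_two, Real.dist_eq, sq_abs]

/-- Twice the cross product `(B - A) × (C - A)`, that is, four times the signed area of the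
triangle `ABC`. -/
noncomputable def twiceCross (A B C : EuclideanSpace ℝ (Fin 2)) : ℝ :=
  2 * ((B 0 - A 0) * (C 1 - A 1) - (B 1 - A 1) * (C 0 - A 0))

/-- Heron's formula. -/
lemma heron_eq_twiceCross_sq (A B C : EuclideanSpace ℝ (Fin 2)) :
    4 * dist A B ^ 2 * dist A C ^ 2 - (dist A B ^ 2 + dist A C ^ 2 - dist B C ^ 2) ^ 2
      = twiceCross A B C ^ 2 := by
  simp only [dist_sq_eq, twiceCross]
  ring

/-- The Cauchy–Binet identity, with the inner products expressed through distances by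
polarization. -/
lemma twiceCross_mul_twiceCross (A B C A' B' C' : EuclideanSpace ℝ (Fin 2)) :
    twiceCross A B C * twiceCross A' B' C' =
      (dist A B' ^ 2 + dist B A' ^ 2 - dist A A' ^ 2 - dist B B' ^ 2) *
        (dist A C' ^ 2 + dist C A' ^ 2 - dist A A' ^ 2 - dist C C' ^ 2) -
      (dist A C' ^ 2 + dist B A' ^ 2 - dist A A' ^ 2 - dist B C' ^ 2) *
        (dist A B' ^ 2 + dist C A' ^ 2 - dist A A' ^ 2 - dist C B' ^ 2) := by
  simp only [dist_sq_eq, twiceCross]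
  ring


/-- The triangles spanned by any two non-collinear triples of points of a
plane integral point set have the same characteristic: if all pairwise
distances among `A, B, C, A', B', C'` are integers, and `D`, `D'` are
squarefree integers with
`4·|AB|²·|AC|² − (|AB|² + |AC|² − |BC|²)² = k²·D` and likewise for the primed
points with `k'²·D'`, where `k, k'` are nonzero integers, then `D = D'`. -/
theorem integral_point_set_same_characteristic
    (A B C A' B' C' : EuclideanSpace ℝ (Fin 2))
    (hint : ∀ P ∈ ({A, B, C, A', B', C'} : Set (EuclideanSpace ℝ (Fin 2))),
      ∀ Q ∈ ({A, B, C, A', B', C'} : Set (EuclideanSpace ℝ (Fin 2))),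
        ∃ z : ℤ, dist P Q = z)
    (D D' : ℤ) (hD : Squarefree D) (hD' : Squarefree D')
    (k k' : ℤ) (hk : k ≠ 0) (hk' : k' ≠ 0)
    (h : 4 * dist A B ^ 2 * dist A C ^ 2
        - (dist A B ^ 2 + dist A C ^ 2 - dist B C ^ 2) ^ 2 = (k : ℝ) ^ 2 * D)
    (h' : 4 * dist A' B' ^ 2 * dist A' C' ^ 2
        - (dist A' B' ^ 2 + dist A' C' ^ 2 - dist B' C' ^ 2) ^ 2 = (k' : ℝ) ^ 2 * D') :
    D = D' := by
  obtain ⟨a, ha⟩ := hint A (by simp) A' (by simp)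
  obtain ⟨b, hb⟩ := hint A (by simp) B' (by simp)
  obtain ⟨c, hc⟩ := hint A (by simp) C' (by simp)
  obtain ⟨d, hd⟩ := hint B (by simp) A' (by simp)
  obtain ⟨e, he⟩ := hint B (by simp) B' (by simp)
  obtain ⟨f, hf⟩ := hint B (by simp) C' (by simp)
  obtain ⟨x, hx⟩ := hint C (by simp) A' (by simp)
  obtain ⟨y, hy⟩ := hint C (by simp) B' (by simp)
  obtain ⟨z, hz⟩ := hint C (by simp) C' (by simp)
  obtain ⟨m, hm⟩ : ∃ m : ℤ, twiceCross A B C * twiceCross A' B' C' = m := by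
    refine ⟨(b ^ 2 + d ^ 2 - a ^ 2 - e ^ 2) * (c ^ 2 + x ^ 2 - a ^ 2 - z ^ 2) -
      (c ^ 2 + d ^ 2 - a ^ 2 - f ^ 2) * (b ^ 2 + x ^ 2 - a ^ 2 - y ^ 2), ?_⟩
    rw [twiceCross_mul_twiceCross, ha, hb, hc, hd, he, hf, hx, hy, hz]
    push_cast
    ring
  rw [heron_eq_twiceCross_sq] at h h'
  have key : (m : ℝ) ^ 2 = ((k : ℝ) * k') ^ 2 * (D * D') := by
    rw [← hm, mul_pow, h, h']
    ring
  exact eq_of_squarefree_of_sq_eq hD hD' (mul_ne_zero hk hk') (by exact_mod_cast key)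
end
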